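/- Suppose that n is even, that J is ferromagnetic, and that the subgraph G_{>0} is connected. Let x_1, …, x_{n/2} : [0,∞) → ℝ be continuous functions such that for every t ≥ 0 one has 0 < x_1(t) < … < x_{n/2}(t) < π/2 and {x ∈ (0,π/2) : Z_{G,t}(x) = 0} = {x_1(t), …, x_{n/2}(t)}. Set y_k(t) := sin²x_k(t). Then each y_k is differentiable on (0,∞) and for every t > 0, y_k′(t) = −(1/sinh(t)) · y_k(t)/(⟨σ_{u₀}σ_{v₀}⟩_J · sinh(t) + cosh(t)) · ∏_{j=1}^{n/2} (y_j(0) − y_k(t))/y_j(0) · ∏_{j=1, j≠k}^{n/2} y_j(t)/(y_j(t) − y_k(t)). -/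

import Mathlib

open scoped Real

noncomputable def spin (b : Bool) : ℝ := if b then 1 else -1

noncomputable def pairProd {V : Type} (σ : V → Bool) (e : Sym2 V) : ℝ :=
  Sym2.lift ⟨fun u v => spin (σ u) * spin (σ v), fun _ _ => mul_comm _ _⟩ e

/-- The Ising partition function `Z_{G,t}(x)` with an extra coupling `t` at the edge
`u₀v₀`, couplings `J` on the edge set `E`, and (complex) external field `i·x`. -/
noncomputable def IsingZ {V : Type} [Fintype V] [DecidableEq V]
    (E : Finset (Sym2 V)) (J : Sym2 V → ℝ) (u₀ v₀ : V) (t x : ℂ) : ℂ :=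
  ∑ σ : V → Bool, Complex.exp
    (t * ((spin (σ u₀) * spin (σ v₀) : ℝ) : ℂ)
      + ((∑ e ∈ E, J e * pairProd σ e : ℝ) : ℂ)
      + Complex.I * x * ((∑ u, spin (σ u) : ℝ) : ℂ))

/-- The two-point correlation `⟨σ_{u₀}σ_{v₀}⟩_J`. -/
noncomputable def corr {V : Type} [Fintype V] [DecidableEq V]
    (E : Finset (Sym2 V)) (J : Sym2 V → ℝ) (u₀ v₀ : V) : ℝ :=
  (∑ σ : V → Bool,
      spin (σ u₀) * spin (σ v₀) * Real.exp (∑ e ∈ E, J e * pairProd σ e))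
    / ∑ σ : V → Bool, Real.exp (∑ e ∈ E, J e * pairProd σ e)

/-! Averaging over the global spin flip replaces `exp (i x M)` by `cos (x M)`, where the
magnetization `M` has the parity of `n` and `|M| ≤ n`. So `Z_t(x)` is `cos x ^ (n % 2)` times a
polynomial of degree at most `n / 2` in `y = sin² x`, and the zeros `y_j(t)` determine it up to its
value at `0`: `Z_t(x) = cos x ^ (n % 2) * (Z_t(0) * ∏ j, (y_j(t) - y) / y_j(t))`.

Since `σ_{u₀}σ_{v₀} = ±1`, the dependence on `t` is `Z_t = cosh t * Z_0 + sinh t * B` with `B`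
independent of `t`. At a zero of `Z_t` the relation `cosh² t - sinh² t = 1` gives
`∂_t Z_t = -Z_0 / sinh t`, and factoring both `Z_t` and `Z_0` as above yields the formula. -/

lemma injOn_Icc_of_lt_add_one {α : Type*} [Preorder α] {f : ℕ → α} {a b : ℕ}
    (h : ∀ k, a ≤ k → k < b → f k < f (k + 1)) : Set.InjOn f (Finset.Icc a b) := by
  rw [Finset.coe_Icc]
  exact (strictMonoOn_of_lt_add_one Set.ordConnected_Icc fun k _ hk hk' =>
    h k hk.1 hk'.2).injOn

section Polynomial

open Polynomial

lemma eval_eq_eval_zero_mul_prod_of_roots {ι K : Type*} [Field K] {s : Finset ι} {r : ι → K}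
    {Q : K[X]} (hdeg : Q.natDegree ≤ s.card) (hr : ∀ j ∈ s, r j ≠ 0) (hinj : Set.InjOn r s)
    (hroot : ∀ j ∈ s, Q.eval (r j) = 0) (y : K) :
    Q.eval y = Q.eval 0 * ∏ j ∈ s, (r j - y) / r j := by
  classical
  set P : K[X] := C (Q.eval 0) * ∏ j ∈ s, C (r j)⁻¹ * (C (r j) - X) with hP
  have eval_P (z : K) : P.eval z = Q.eval 0 * ∏ j ∈ s, (r j - z) / r j := by
    simp [hP, eval_prod, div_eq_inv_mul]
  have natDegree_P : P.natDegree ≤ s.card := by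
    refine (natDegree_C_mul_le _ _).trans ((natDegree_prod_le _ _).trans ?_)
    refine (Finset.sum_le_card_nsmul _ _ 1 fun j _ => ?_).trans (by simp)
    compute_degree
  have card_nodes : (insert 0 (s.image r)).card = s.card + 1 := by
    rw [Finset.card_insert_of_notMem (by simpa using hr), Finset.card_image_of_injOn hinj]
  have eval_nodes : ∀ z ∈ insert 0 (s.image r), Q.eval z = P.eval z := by
    simp only [Finset.mem_insert, Finset.mem_image]
    rintro z (rfl | ⟨j, hj, rfl⟩)
    · rw [eval_P, Finset.prod_congr rfl fun j hj => by rw [sub_zero, div_self (hr j hj)]]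
      simp
    · rw [eval_P, hroot j hj, Finset.prod_eq_zero hj (by simp), mul_zero]
  rw [← eval_P, ← eq_of_natDegree_lt_card_of_eval_eq' Q P _ eval_nodes
    (card_nodes ▸ Nat.lt_succ_of_le (max_le hdeg natDegree_P))]

lemma exists_chebyshev_T_eq_pow_mul_comp (R : Type*) [CommRing R] (m : ℕ) :
    ∃ Q : R[X], Q.natDegree ≤ m / 2 ∧
      Chebyshev.T R m = X ^ (m % 2) * Q.comp (1 - X ^ 2) := by
  induction m using Nat.twoStepInduction with
  | zero => exact ⟨1, by simp, by simp⟩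
  | one => exact ⟨1, by simp, by simp⟩
  | more m ih ih' =>
    obtain ⟨P, hP, hTP⟩ := ih
    obtain ⟨Q, hQ, hTQ⟩ := ih'
    have hT : Chebyshev.T R ((m + 2 : ℕ) : ℤ)
        = 2 * X * Chebyshev.T R ((m + 1 : ℕ) : ℤ) - Chebyshev.T R m := by
      push_cast
      exact Chebyshev.T_add_two R m
    rcases Nat.mod_two_eq_zero_or_one m with hm | hm
    · refine ⟨2 * (1 - X) * Q - P, ?_, ?_⟩
      · have : (2 * (1 - X) : R[X]).natDegree ≤ 1 := by compute_degree
        refine (natDegree_sub_le _ _).trans (max_le (natDegree_mul_le.trans ?_) ?_) <;> omega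
      · rw [hT, hTP, hTQ, hm, show (m + 1) % 2 = 1 by omega, show (m + 2) % 2 = 0 by omega]
        simp only [sub_comp, mul_comp, one_comp, X_comp, ofNat_comp]
        ring
    · refine ⟨2 * Q - P, ?_, ?_⟩
      · have : (2 * Q).natDegree ≤ Q.natDegree := natDegree_C_mul_le 2 Q
        refine (natDegree_sub_le _ _).trans (max_le ?_ ?_) <;> omega
      · rw [hT, hTP, hTQ, hm, show (m + 1) % 2 = 0 by omega, show (m + 2) % 2 = 1 by omega]
        simp only [sub_comp, mul_comp, ofNat_comp]
        ring

lemma exists_cos_nat_mul_eq_pow_mul_eval_sin_sq (m : ℕ) :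
    ∃ Q : ℝ[X], Q.natDegree ≤ m / 2 ∧
      ∀ z : ℝ, Real.cos (m * z) = Real.cos z ^ (m % 2) * Q.eval (Real.sin z ^ 2) := by
  obtain ⟨Q, hdeg, hT⟩ := exists_chebyshev_T_eq_pow_mul_comp ℝ m
  refine ⟨Q, hdeg, fun z => ?_⟩
  have h := Chebyshev.T_real_cos z m
  rw [hT] at h
  simpa [eval_comp, ← Real.sin_sq] using h.symm

end Polynomial

section Calculus

variable {𝕜 : Type*} [NontriviallyNormedField 𝕜]

lemma hasDerivAt_mul_of_continuousAt_of_eq_zero {f g : 𝕜 → 𝕜} {f' t : 𝕜} (hf : HasDerivAt f f' t)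
    (hg : ContinuousAt g t) (hft : f t = 0) : HasDerivAt (fun u => f u * g u) (f' * g t) t := by
  rw [hasDerivAt_iff_tendsto_slope] at hf ⊢
  refine (hf.mul (hg.mono_left nhdsWithin_le_nhds)).congr fun u => ?_
  simp only [slope_def_field, hft]
  ring

lemma hasDerivAt_root_of_eventuallyEq_mul_prod {ι : Type*} [DecidableEq ι] {s : Finset ι} {k : ι}
    (hk : k ∈ s) {y : ι → 𝕜 → 𝕜} {F c : 𝕜 → 𝕜} {F' t : 𝕜}
    (hy : ∀ j ∈ s, ContinuousAt (y j) t) (hy₀ : ∀ j ∈ s, y j t ≠ 0)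
    (hinj : Set.InjOn (fun j => y j t) s) (hc : ContinuousAt c t) (hc₀ : c t ≠ 0)
    (hF : HasDerivAt F F' t)
    (hfac : F =ᶠ[nhds t] fun u => c u * ∏ j ∈ s, (y j u - y k t) / y j u) :
    HasDerivAt (y k) (F' * (y k t / c t) * ∏ j ∈ s.erase k, y j t / (y j t - y k t)) t := by
  have hmem {j : ι} (hj : j ∈ s.erase k) : j ∈ s := Finset.mem_of_mem_erase hj
  set P : 𝕜 → 𝕜 := fun u => ∏ j ∈ s.erase k, (y j u - y k t) / y j u with hP
  set g : 𝕜 → 𝕜 := fun u => y k u / c u * (P u)⁻¹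
  have P_continuousAt : ContinuousAt P t := tendsto_finsetProd _ fun j hj =>
    ((hy j (hmem hj)).sub tendsto_const_nhds).div (hy j (hmem hj)) (hy₀ j (hmem hj))
  have P_ne_zero : P t ≠ 0 := by
    refine Finset.prod_ne_zero_iff.2 fun j hj => div_ne_zero (sub_ne_zero.2 fun h => ?_)
      (hy₀ j (hmem hj))
    exact Finset.ne_of_mem_erase hj (hinj (hmem hj) hk h)
  have P_inv : (P t)⁻¹ = ∏ j ∈ s.erase k, y j t / (y j t - y k t) := by
    simp only [hP, ← Finset.prod_inv_distrib, inv_div]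
  have g_continuousAt : ContinuousAt g t :=
    ((hy k hk).div hc hc₀).mul (P_continuousAt.inv₀ P_ne_zero)
  have F_eq_zero : F t = 0 := by
    refine hfac.self_of_nhds.trans (mul_eq_zero_of_right _ (Finset.prod_eq_zero hk ?_))
    rw [sub_self, zero_div]
  -- `y k` is only known to be continuous, so `g` is too: differentiability comes from `F t = 0`.
  have y_eq : y k =ᶠ[nhds t] fun u => y k t + F u * g u := by
    filter_upwards [hfac, (hy k hk).eventually_ne (hy₀ k hk), hc.eventually_ne hc₀,
      P_continuousAt.eventually_ne P_ne_zero] with u hFu hyu hcu hPu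
    rw [hFu, ← Finset.mul_prod_erase s _ hk]
    change _ = y k t + c u * ((y k u - y k t) / y k u * P u) * (y k u / c u * (P u)⁻¹)
    field_simp
    ring
  rw [← P_inv, mul_assoc]
  exact ((hasDerivAt_mul_of_continuousAt_of_eq_zero hF g_continuousAt F_eq_zero).const_add
    (y k t)).congr_of_eventuallyEq y_eq

lemma hasDerivAt_cosh_mul_add_sinh_mul_of_eq_zero {a b t : ℝ} (ht : t ≠ 0)
    (h : Real.cosh t * a + Real.sinh t * b = 0) :
    HasDerivAt (fun u => Real.cosh u * a + Real.sinh u * b) (-(1 / Real.sinh t) * a) t := by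
  have hsinh : Real.sinh t ≠ 0 := Real.sinh_ne_zero.2 ht
  refine (((Real.hasDerivAt_cosh t).mul_const a).add
    ((Real.hasDerivAt_sinh t).mul_const b)).congr_deriv ?_
  field_simp
  linear_combination Real.cosh t * h - a * Real.cosh_sq t

end Calculus

section Trigonometry

variable {z : ℝ}

lemma sin_pos_of_mem_Ioo_pi_div_two (hz : z ∈ Set.Ioo 0 (π / 2)) : 0 < Real.sin z :=
  Real.sin_pos_of_mem_Ioo ⟨hz.1, hz.2.trans (half_lt_self Real.pi_pos)⟩

lemma cos_pos_of_mem_Ioo_pi_div_two (hz : z ∈ Set.Ioo 0 (π / 2)) : 0 < Real.cos z :=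
  Real.cos_pos_of_mem_Ioo ⟨(neg_lt_zero.2 Real.pi_div_two_pos).trans hz.1, hz.2⟩

lemma injOn_sin_sq : Set.InjOn (fun w => Real.sin w ^ 2) (Set.Ioo 0 (π / 2)) := by
  have hsub : Set.Ioo 0 (π / 2) ⊆ Set.Icc (-(π / 2)) (π / 2) :=
    Set.Ioo_subset_Icc_self.trans (Set.Icc_subset_Icc_left (neg_nonpos.2 Real.pi_div_two_pos.le))
  intro _ hz _ hw h
  exact Real.injOn_sin (hsub hz) (hsub hw) ((pow_left_inj₀ (sin_pos_of_mem_Ioo_pi_div_two hz).le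
    (sin_pos_of_mem_Ioo_pi_div_two hw).le two_ne_zero).1 h)

end Trigonometry

section Spin

lemma spin_not (b : Bool) : spin (!b) = -spin b := by
  cases b <;> simp [spin]

lemma spin_mul_spin_eq_one_or (a b : Bool) : spin a * spin b = 1 ∨ spin a * spin b = -1 := by
  cases a <;> cases b <;> simp [spin]

lemma pairProd_not {V : Type} (σ : V → Bool) (e : Sym2 V) :
    pairProd (fun v => !σ v) e = pairProd σ e := by
  induction e with
  | _ u v => simp [pairProd, spin_not]

variable {V : Type} [Fintype V]

/-- The total magnetization `∑ u, σ_u` of a spin configuration, which couples to the external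
field. -/
noncomputable def magnetization (σ : V → Bool) : ℝ := ∑ u, spin (σ u)

lemma magnetization_not (σ : V → Bool) : magnetization (fun v => !σ v) = -magnetization σ := by
  simp [magnetization, spin_not]

lemma magnetization_eq (σ : V → Bool) :
    magnetization σ = 2 * ((Finset.univ.filter fun u => σ u = true).card : ℝ) - Fintype.card V := by
  have h (u : V) : spin (σ u) = 2 * (if σ u = true then 1 else 0) - 1 := by
    cases σ u <;> norm_num [spin]
  simp only [magnetization, h, Finset.sum_sub_distrib, ← Finset.mul_sum, Finset.sum_boole]
  simp

lemma exists_nat_abs_magnetization_eq (σ : V → Bool) :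
    ∃ m : ℕ, m ≤ Fintype.card V ∧ m % 2 = Fintype.card V % 2 ∧ |magnetization σ| = m := by
  set p := (Finset.univ.filter fun u => σ u = true).card with hp
  have hle : p ≤ Fintype.card V := Finset.card_le_univ _
  refine ⟨(2 * (p : ℤ) - Fintype.card V).natAbs, by omega, by omega, ?_⟩
  rw [magnetization_eq, ← hp, Nat.cast_natAbs]
  push_cast
  rfl

end Spin

section CosSum

variable {V : Type} [Fintype V] [DecidableEq V]

/-- The cosine transform at `z` of the magnetization under the weights `w` on configurations,
which is the partition function in the field `i z` when `w` is the Boltzmann weight. The weights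
are kept arbitrary because the hyperbolic decomposition in `t` also involves signed ones. -/
noncomputable def cosSum (w : (V → Bool) → ℝ) (z : ℝ) : ℝ :=
  ∑ σ, w σ * Real.cos (z * magnetization σ)

lemma cosSum_apply_zero (w : (V → Bool) → ℝ) : cosSum w 0 = ∑ σ, w σ := by
  simp [cosSum]

lemma sum_mul_cexp_eq_cosSum {w : (V → Bool) → ℝ} (hw : ∀ σ, w (fun v => !σ v) = w σ) (z : ℝ) :
    ∑ σ, (w σ : ℂ) * Complex.exp (((z * magnetization σ : ℝ) : ℂ) * Complex.I) = cosSum w z := by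
  set S := ∑ σ, (w σ : ℂ) * Complex.exp (((z * magnetization σ : ℝ) : ℂ) * Complex.I) with hS
  have S_flip : S = ∑ σ, (w σ : ℂ) * Complex.exp (-((z * magnetization σ : ℝ) : ℂ) * Complex.I) :=
    Fintype.sum_equiv (Equiv.piCongrRight fun _ => Equiv.boolNot) _ _ fun σ => by
      change _ = (w (fun v => !σ v) : ℂ)
        * Complex.exp (-((z * magnetization (fun v => !σ v) : ℝ) : ℂ) * Complex.I)
      simp [hw, magnetization_not]
  refine mul_left_cancel₀ (two_ne_zero (α := ℂ)) ?_
  calc 2 * S = S + S := two_mul S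
    _ = ∑ σ, (w σ : ℂ) * (2 * Complex.cos ((z * magnetization σ : ℝ) : ℂ)) := by
      nth_rewrite 2 [S_flip]
      simp only [hS, ← Finset.sum_add_distrib, ← mul_add, Complex.two_cos]
    _ = 2 * (cosSum w z : ℂ) := by
      simp only [cosSum, Complex.ofReal_sum, Complex.ofReal_mul, Complex.ofReal_cos,
        Finset.mul_sum, mul_left_comm]

open Polynomial in
lemma exists_cosSum_eq_pow_mul_eval_sin_sq (w : (V → Bool) → ℝ) :
    ∃ Q : ℝ[X], Q.natDegree ≤ Fintype.card V / 2 ∧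
      ∀ z, cosSum w z = Real.cos z ^ (Fintype.card V % 2) * Q.eval (Real.sin z ^ 2) := by
  have hσ (σ : V → Bool) : ∃ Q : ℝ[X], Q.natDegree ≤ Fintype.card V / 2 ∧ ∀ z,
      Real.cos (z * magnetization σ)
        = Real.cos z ^ (Fintype.card V % 2) * Q.eval (Real.sin z ^ 2) := by
    obtain ⟨m, hle, hparity, hm⟩ := exists_nat_abs_magnetization_eq σ
    obtain ⟨Q, hdeg, hQ⟩ := exists_cos_nat_mul_eq_pow_mul_eval_sin_sq m
    refine ⟨Q, hdeg.trans (Nat.div_le_div_right hle), fun z => ?_⟩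
    rw [← hparity, ← hQ, ← hm, ← Real.cos_abs, ← Real.cos_abs (_ * z), abs_mul, abs_mul, abs_abs,
      mul_comm]
  choose Q hdeg hQ using hσ
  refine ⟨∑ σ, C (w σ) * Q σ, natDegree_sum_le_of_forall_le _ _ fun σ _ =>
    (natDegree_C_mul_le _ _).trans (hdeg σ), fun z => ?_⟩
  simp only [cosSum, hQ, eval_finsetSum, eval_mul, eval_C, Finset.mul_sum, mul_left_comm]

lemma cosSum_eq_pow_mul_prod_of_zeros (w : (V → Bool) → ℝ) {ι : Type*} {s : Finset ι}
    (hs : s.card = Fintype.card V / 2) {x : ι → ℝ} (hx : ∀ j ∈ s, x j ∈ Set.Ioo 0 (π / 2))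
    (hinj : Set.InjOn x s) (hzero : ∀ j ∈ s, cosSum w (x j) = 0) (z : ℝ) :
    cosSum w z = Real.cos z ^ (Fintype.card V % 2) *
      (cosSum w 0 * ∏ j ∈ s, (Real.sin (x j) ^ 2 - Real.sin z ^ 2) / Real.sin (x j) ^ 2) := by
  obtain ⟨Q, hdeg, hQ⟩ := exists_cosSum_eq_pow_mul_eval_sin_sq w
  have Q_zero : Q.eval 0 = cosSum w 0 := by simp [hQ]
  have Q_root (j : ι) (hj : j ∈ s) : Q.eval (Real.sin (x j) ^ 2) = 0 :=
    (mul_eq_zero.1 ((hQ _).symm.trans (hzero j hj))).resolve_left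
      (pow_ne_zero _ (cos_pos_of_mem_Ioo_pi_div_two (hx j hj)).ne')
  rw [hQ, ← Q_zero, ← eval_eq_eval_zero_mul_prod_of_roots (hs ▸ hdeg)
    (fun j hj => pow_ne_zero 2 (sin_pos_of_mem_Ioo_pi_div_two (hx j hj)).ne')
    (injOn_sin_sq.comp hinj hx) Q_root]

end CosSum

section Ising

variable {V : Type} (E : Finset (Sym2 V)) (J : Sym2 V → ℝ) (u₀ v₀ : V)

/-- The Boltzmann weight of a configuration in zero field, with the extra coupling `t` between `u₀`
and `v₀`. -/
noncomputable def boltzmannWeight (t : ℝ) (σ : V → Bool) : ℝ :=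
  Real.exp (t * (spin (σ u₀) * spin (σ v₀)) + ∑ e ∈ E, J e * pairProd σ e)

lemma boltzmannWeight_eq (t : ℝ) (σ : V → Bool) :
    boltzmannWeight E J u₀ v₀ t σ = Real.cosh t * boltzmannWeight E J u₀ v₀ 0 σ
      + Real.sinh t * (spin (σ u₀) * spin (σ v₀) * boltzmannWeight E J u₀ v₀ 0 σ) := by
  rw [boltzmannWeight, boltzmannWeight, Real.exp_add, zero_mul, zero_add]
  rcases spin_mul_spin_eq_one_or (σ u₀) (σ v₀) with h | h
  · rw [h, mul_one, ← Real.cosh_add_sinh]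
    ring
  · rw [h, mul_neg_one, ← Real.cosh_sub_sinh]
    ring

variable [Fintype V] [DecidableEq V]

lemma IsingZ_eq_cosSum (t z : ℝ) :
    IsingZ E J u₀ v₀ t z = cosSum (boltzmannWeight E J u₀ v₀ t) z := by
  rw [← sum_mul_cexp_eq_cosSum fun σ => by simp [boltzmannWeight, spin_not, pairProd_not]]
  refine Finset.sum_congr rfl fun σ _ => ?_
  rw [boltzmannWeight, magnetization, Complex.ofReal_exp, ← Complex.exp_add]
  congr 1
  push_cast
  ring

lemma cosSum_boltzmannWeight_eq (t z : ℝ) :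
    cosSum (boltzmannWeight E J u₀ v₀ t) z = Real.cosh t * cosSum (boltzmannWeight E J u₀ v₀ 0) z
      + Real.sinh t *
        cosSum (fun σ => spin (σ u₀) * spin (σ v₀) * boltzmannWeight E J u₀ v₀ 0 σ) z := by
  simp only [cosSum, boltzmannWeight_eq E J u₀ v₀ t, Finset.mul_sum, ← Finset.sum_add_distrib,
    add_mul, mul_assoc]

lemma cosSum_boltzmannWeight_apply_zero_pos (t : ℝ) :
    0 < cosSum (boltzmannWeight E J u₀ v₀ t) 0 := by
  rw [cosSum_apply_zero]
  exact Finset.sum_pos (fun _ _ => Real.exp_pos _) Finset.univ_nonempty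

lemma cosSum_boltzmannWeight_apply_zero (t : ℝ) :
    cosSum (boltzmannWeight E J u₀ v₀ t) 0 = cosSum (boltzmannWeight E J u₀ v₀ 0) 0
      * (corr E J u₀ v₀ * Real.sinh t + Real.cosh t) := by
  have corr_eq : corr E J u₀ v₀
      = cosSum (fun σ => spin (σ u₀) * spin (σ v₀) * boltzmannWeight E J u₀ v₀ 0 σ) 0
        / cosSum (boltzmannWeight E J u₀ v₀ 0) 0 := by
    simp [corr, cosSum_apply_zero, boltzmannWeight]
  have := (cosSum_boltzmannWeight_apply_zero_pos E J u₀ v₀ 0).ne'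
  rw [cosSum_boltzmannWeight_eq, corr_eq]
  field_simp
  ring

lemma hasDerivAt_cosSum_boltzmannWeight_of_eq_zero {t z : ℝ} (ht : t ≠ 0)
    (h : cosSum (boltzmannWeight E J u₀ v₀ t) z = 0) :
    HasDerivAt (fun u => cosSum (boltzmannWeight E J u₀ v₀ u) z)
      (-(1 / Real.sinh t) * cosSum (boltzmannWeight E J u₀ v₀ 0) z) t := by
  rw [cosSum_boltzmannWeight_eq] at h
  rw [funext fun u => cosSum_boltzmannWeight_eq E J u₀ v₀ u z]
  exact hasDerivAt_cosh_mul_add_sinh_mul_of_eq_zero ht h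

lemma continuous_cosSum_boltzmannWeight (z : ℝ) :
    Continuous fun t => cosSum (boltzmannWeight E J u₀ v₀ t) z := by
  unfold cosSum boltzmannWeight
  fun_prop

theorem stmt10_general {ι : Type*} [DecidableEq ι] {s : Finset ι}
    (hs : s.card = Fintype.card V / 2) {x : ι → ℝ → ℝ} {T : Set ℝ} (h0 : 0 ∈ T)
    (hcont : ∀ k ∈ s, ContinuousOn (x k) T)
    (hmem : ∀ t ∈ T, ∀ k ∈ s, x k t ∈ Set.Ioo 0 (π / 2))
    (hinj : ∀ t ∈ T, Set.InjOn (fun k => x k t) s)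
    (hzero : ∀ t ∈ T, ∀ k ∈ s, IsingZ E J u₀ v₀ t (x k t) = 0) :
    ∀ k ∈ s, ∀ t ∈ interior T, t ≠ 0 →
      HasDerivAt (fun u => Real.sin (x k u) ^ 2)
        (-(1 / Real.sinh t) *
            (Real.sin (x k t) ^ 2
              / (corr E J u₀ v₀ * Real.sinh t + Real.cosh t)) *
            (∏ j ∈ s, (Real.sin (x j 0) ^ 2 - Real.sin (x k t) ^ 2) / Real.sin (x j 0) ^ 2) *
            ∏ j ∈ s.erase k,
              Real.sin (x j t) ^ 2 / (Real.sin (x j t) ^ 2 - Real.sin (x k t) ^ 2)) t := by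
  intro k hk t ht ht₀
  have htT : t ∈ T := interior_subset ht
  have hT : T ∈ nhds t := mem_interior_iff_mem_nhds.1 ht
  have Z_zero (u : ℝ) (hu : u ∈ T) (j : ι) (hj : j ∈ s) :
      cosSum (boltzmannWeight E J u₀ v₀ u) (x j u) = 0 := by
    exact_mod_cast (IsingZ_eq_cosSum E J u₀ v₀ u (x j u)).symm.trans (hzero u hu j hj)
  set c : ℝ → ℝ := fun u =>
    Real.cos (x k t) ^ (Fintype.card V % 2) * cosSum (boltzmannWeight E J u₀ v₀ u) 0 with hc
  have c_cont : Continuous c :=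
    continuous_const.mul (continuous_cosSum_boltzmannWeight E J u₀ v₀ 0)
  have c_ne_zero (u : ℝ) : c u ≠ 0 := mul_ne_zero
    (pow_ne_zero _ (cos_pos_of_mem_Ioo_pi_div_two (hmem t htT k hk)).ne')
    (cosSum_boltzmannWeight_apply_zero_pos E J u₀ v₀ u).ne'
  have c_eq : c t = c 0 * (corr E J u₀ v₀ * Real.sinh t + Real.cosh t) := by
    simp only [hc, cosSum_boltzmannWeight_apply_zero E J u₀ v₀ t, mul_assoc]
  have Z_fac (u : ℝ) (hu : u ∈ T) : cosSum (boltzmannWeight E J u₀ v₀ u) (x k t) = c u *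
      ∏ j ∈ s, (Real.sin (x j u) ^ 2 - Real.sin (x k t) ^ 2) / Real.sin (x j u) ^ 2 :=
    (cosSum_eq_pow_mul_prod_of_zeros _ hs (hmem u hu) (hinj u hu) (Z_zero u hu) (x k t)).trans
      (mul_assoc _ _ _).symm
  have Z_deriv := hasDerivAt_cosSum_boltzmannWeight_of_eq_zero E J u₀ v₀ ht₀ (Z_zero t htT k hk)
  have y_deriv := hasDerivAt_root_of_eventuallyEq_mul_prod hk
    (y := fun j u => Real.sin (x j u) ^ 2)
    (fun j hj => (Real.continuous_sin.continuousAt.comp ((hcont j hj).continuousAt hT)).pow 2)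
    (fun j hj => pow_ne_zero 2 (sin_pos_of_mem_Ioo_pi_div_two (hmem t htT j hj)).ne')
    (injOn_sin_sq.comp (hinj t htT) (hmem t htT)) c_cont.continuousAt (c_ne_zero t) Z_deriv
    (Filter.mem_of_superset hT Z_fac)
  refine y_deriv.congr_deriv ?_
  have := c_ne_zero 0
  rw [Z_fac 0 h0, c_eq]
  field_simp

end Ising

theorem stmt10 {V : Type} [Fintype V] [DecidableEq V]
    (E : Finset (Sym2 V)) (J : Sym2 V → ℝ) (u₀ v₀ : V)
    (hE : s(u₀, v₀) ∈ E)
    (hferro : ∀ e ∈ E, 0 ≤ J e)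
    (hconn : (SimpleGraph.fromEdgeSet {e : Sym2 V | e ∈ E ∧ 0 < J e}).Connected)
    (n : ℕ) (hn : n = Fintype.card V) (heven : Even n)
    (x : ℕ → ℝ → ℝ)
    (hcont : ∀ k ∈ Finset.Icc 1 (n / 2), ContinuousOn (x k) (Set.Ici 0))
    (hzeros : ∀ t : ℝ, 0 ≤ t →
      (∀ k ∈ Finset.Icc 1 (n / 2), 0 < x k t ∧ x k t < π / 2) ∧
      (∀ k, 1 ≤ k → k < n / 2 → x k t < x (k + 1) t) ∧
      {z : ℝ | z ∈ Set.Ioo 0 (π / 2) ∧ IsingZ E J u₀ v₀ t z = 0}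
        = (fun k => x k t) '' Set.Icc 1 (n / 2)) :
    ∀ k ∈ Finset.Icc 1 (n / 2), ∀ t : ℝ, 0 < t →
      HasDerivAt (fun u => Real.sin (x k u) ^ 2)
        (-(1 / Real.sinh t) *
            (Real.sin (x k t) ^ 2
              / (corr E J u₀ v₀ * Real.sinh t + Real.cosh t)) *
            (∏ j ∈ Finset.Icc 1 (n / 2),
              (Real.sin (x j 0) ^ 2 - Real.sin (x k t) ^ 2)
                / Real.sin (x j 0) ^ 2) *
            ∏ j ∈ (Finset.Icc 1 (n / 2)).erase k,
              Real.sin (x j t) ^ 2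
                / (Real.sin (x j t) ^ 2 - Real.sin (x k t) ^ 2)) t := by
  subst hn
  exact fun k hk t ht => stmt10_general E J u₀ v₀ (by simp) Set.self_mem_Ici hcont
    (fun u hu => (hzeros u hu).1) (fun u hu => injOn_Icc_of_lt_add_one (hzeros u hu).2.1)
    (fun u hu j hj => ((hzeros u hu).2.2.ge ⟨j, Finset.mem_Icc.1 hj, rfl⟩).2)
    k hk t (interior_Ici.ge ht) ht.ne'
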